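/- Let X and Y be pre-ordered Banach spaces with closed cones, with Y α-normal for some α > 0. If the operator norm on B(X,Y) is positively attained, then B(X,Y) is α-normal: for all T, S ∈ B(X,Y), 0 ≤ T ≤ S implies ‖T‖ ≤ α‖S‖. -/

import Mathlib

section PositiveOperators

variable {E 𝕜 X Y : Type*} [SeminormedAddCommGroup E] [NontriviallyNormedField 𝕜]
  [SeminormedAddCommGroup X] [NormedSpace 𝕜 X] [SeminormedAddCommGroup Y] [NormedSpace 𝕜 Y]
  {Cx : Set X} {Cy : Set Y} {α M : ℝ} {T S : X →L[𝕜] Y}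

/-- `α`-normality of a space pre-ordered by `x ≤ y ↔ y - x ∈ C`, with the positive cone `C` encoded
as a plain set: `0 ≤ x ≤ y` implies `‖x‖ ≤ α * ‖y‖`. -/
def IsAlphaNormal (α : ℝ) (C : Set E) : Prop :=
  ∀ x y : E, x ∈ C → y - x ∈ C → ‖x‖ ≤ α * ‖y‖

variable (𝕜) in
/-- The operators sending `Cx` into `Cy`: when these are the positive cones of `X` and `Y`,
this is the positive cone `B(X, Y)₊`. -/
def positiveOperators (Cx : Set X) (Cy : Set Y) : Set (X →L[𝕜] Y) :=
  {T | ∀ x ∈ Cx, T x ∈ Cy}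

/-- The quantity `‖T‖₊`, the supremum of `‖T x‖` over the unit vectors `x` of `Cx`. It is `0` when
`Cx` has no unit vector. -/
noncomputable def positiveNorm (Cx : Set X) (T : X →L[𝕜] Y) : ℝ :=
  sSup {r : ℝ | ∃ x, x ∈ Cx ∧ ‖x‖ = 1 ∧ r = ‖T x‖}

theorem positiveNorm_nonneg : 0 ≤ positiveNorm Cx T := by
  refine Real.sSup_nonneg ?_
  rintro _ ⟨x, -, -, rfl⟩
  exact norm_nonneg (T x)

theorem positiveNorm_le (hM : 0 ≤ M) (h : ∀ x ∈ Cx, ‖x‖ = 1 → ‖T x‖ ≤ M) :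
    positiveNorm Cx T ≤ M := by
  refine Real.sSup_le ?_ hM
  rintro _ ⟨x, hx, hx_unit, rfl⟩
  exact h x hx hx_unit

theorem positiveNorm_le_opNorm : positiveNorm Cx T ≤ ‖T‖ :=
  positiveNorm_le (norm_nonneg T) fun x _ hx_unit ↦ T.unit_le_opNorm x hx_unit.le

theorem norm_apply_le_positiveNorm {x : X} (hx : x ∈ Cx) (hx_unit : ‖x‖ = 1) :
    ‖T x‖ ≤ positiveNorm Cx T := by
  refine le_csSup ⟨‖T‖, ?_⟩ ⟨x, hx, hx_unit, rfl⟩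
  rintro _ ⟨z, -, hz_unit, rfl⟩
  exact T.unit_le_opNorm z hz_unit.le

theorem IsAlphaNormal.positiveNorm_le_mul (hCy : IsAlphaNormal α Cy) (hα : 0 ≤ α)
    (hT : T ∈ positiveOperators 𝕜 Cx Cy) (hST : S - T ∈ positiveOperators 𝕜 Cx Cy) :
    positiveNorm Cx T ≤ α * positiveNorm Cx S := by
  refine positiveNorm_le (mul_nonneg hα positiveNorm_nonneg) fun x hx hx_unit ↦ ?_
  calc
    ‖T x‖ ≤ α * ‖S x‖ := hCy (T x) (S x) (hT x hx) (hST x hx)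
    _ ≤ α * positiveNorm Cx S :=
      mul_le_mul_of_nonneg_left (norm_apply_le_positiveNorm hx hx_unit) hα

theorem stmt_8_general (hα : 0 ≤ α) (hCy : IsAlphaNormal α Cy)
    (hattained : ∀ T ∈ positiveOperators 𝕜 Cx Cy, ‖T‖ = positiveNorm Cx T) :
    IsAlphaNormal α (positiveOperators 𝕜 Cx Cy) := by
  intro T S hT hST
  calc
    ‖T‖ = positiveNorm Cx T := hattained T hT
    _ ≤ α * positiveNorm Cx S := hCy.positiveNorm_le_mul hα hT hST
    _ ≤ α * ‖S‖ := mul_le_mul_of_nonneg_left positiveNorm_le_opNorm hα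

end PositiveOperators

/-- If `Y` is `α`-normal and the operator norm on `B(X,Y)` is positively
attained (`‖T‖ = ‖T‖₊` for all positive `T`), then `B(X,Y)` is `α`-normal. -/
theorem stmt_8
    {X : Type*} [NormedAddCommGroup X] [NormedSpace ℝ X] [CompleteSpace X]
    {Y : Type*} [NormedAddCommGroup Y] [NormedSpace ℝ Y] [CompleteSpace Y]
    (Cx : Set X) (hCx_closed : IsClosed Cx)
    (hCx_add : ∀ a ∈ Cx, ∀ b ∈ Cx, a + b ∈ Cx)
    (hCx_smul : ∀ r : ℝ, 0 ≤ r → ∀ a ∈ Cx, r • a ∈ Cx)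
    (Cy : Set Y) (hCy_closed : IsClosed Cy)
    (hCy_add : ∀ a ∈ Cy, ∀ b ∈ Cy, a + b ∈ Cy)
    (hCy_smul : ∀ r : ℝ, 0 ≤ r → ∀ a ∈ Cy, r • a ∈ Cy)
    (α : ℝ) (hα : 0 < α)
    (hYnormal : ∀ x y : Y, x ∈ Cy → y - x ∈ Cy → ‖x‖ ≤ α * ‖y‖)
    (hposattained : ∀ T : X →L[ℝ] Y, (∀ x ∈ Cx, T x ∈ Cy) →
      ‖T‖ = sSup {r : ℝ | ∃ x, x ∈ Cx ∧ ‖x‖ = 1 ∧ r = ‖T x‖}) :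
    ∀ T S : X →L[ℝ] Y, (∀ x ∈ Cx, T x ∈ Cy) → (∀ x ∈ Cx, (S - T) x ∈ Cy) →
      ‖T‖ ≤ α * ‖S‖ :=
  stmt_8_general hα.le hYnormal hposattained
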